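/- For every integer k ≥ 1, every n ≥ 1 and every signature ε ∈ {+,−}ⁿ, the Cambrian (k,ε)-twist congruence ≡ᵏ_ε is a lattice congruence of the weak order on S_n: every ≡ᵏ_ε-class has a weak-order minimum and a weak-order maximum, and whenever τ ≤ τ' in the weak order, the minimum of the class of τ is ≤ the minimum of the class of τ', and the maximum of the class of τ is ≤ the maximum of the class of τ'. -/

import Mathlib

/-! Call the data `(a, c, S)`, with `a < c` values and `S` the set of values standing to the left
of two adjacent entries `a`, `c`, an arc; an exchange of `a` and `c` is allowed according to a
condition on this arc. The only properties of the condition that matter are that it depends on `S`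
only through `S ∩ (a, c)`, and that it is inherited by larger arcs (`GoodArcs`).

For any such family of arcs, orient the allowed exchanges downwards (`DownStep`). If `τ` has two
descents and the second one may be exchanged, then the result of exchanging the first can be
rewritten downwards to a permutation below the result of exchanging the second
(`exists_reduce_le`); the only interesting case is that of two overlapping descents `c b a`, where
the arcs needed are inherited from the given one. By induction along the weak order, every normal
form of `τ` is below every normal form of `τ'` whenever `τ ≤ τ'` (`normalForm_le`). Taking `τ = τ'`,
normal forms are unique, hence they are the minima of the classes, and the map to them is order
preserving. Maxima are obtained by reading words backwards, which reverses the weak order and turns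
the `(k, ε)`-twist congruence into the `(k, -ε)`-twist congruence. -/

/-- The (right) weak order on permutations of `Fin n`: `τ ≤ σ` iff every coinversion of `τ`
(pair of values `i < j` whose positions in `τ` are inverted) is a coinversion of `σ`. -/
def weakLE {n : ℕ} (τ σ : Equiv.Perm (Fin n)) : Prop :=
  ∀ i j : Fin n, i < j → τ.symm j < τ.symm i → σ.symm j < σ.symm i
/-- One rewriting step of the Cambrian `(k,ε)`-twist congruence (signature `ε`, with `true`
standing for `+` and `false` for `-`): exchange two adjacent entries `a < c` of the one-line
notation (positions `p` and `q = p+1`) whenever there exist values `a < a' < c' < c` such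
that either the number of positive values in `[a',c']` before the pair exceeds the number of
negative values in `[a',c']` after the pair by at least `k`, or conversely. -/
def cambStep (k : ℕ) {n : ℕ} (ε : Fin n → Bool) (τ τ' : Equiv.Perm (Fin n)) : Prop :=
  ∃ p q : Fin n, (q : ℕ) = (p : ℕ) + 1 ∧ τ' = τ * Equiv.swap p q ∧
    ∃ a' c' : Fin n, min (τ p) (τ q) < a' ∧ a' < c' ∧ c' < max (τ p) (τ q) ∧
      ((Finset.univ.filter (fun v : Fin n =>
          a' ≤ v ∧ v ≤ c' ∧ ε v = false ∧ q < τ.symm v)).card + k ≤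
        (Finset.univ.filter (fun u : Fin n =>
          a' ≤ u ∧ u ≤ c' ∧ ε u = true ∧ τ.symm u < p)).card ∨
       (Finset.univ.filter (fun u : Fin n =>
          a' ≤ u ∧ u ≤ c' ∧ ε u = true ∧ τ.symm u < p)).card + k ≤
        (Finset.univ.filter (fun v : Fin n =>
          a' ≤ v ∧ v ≤ c' ∧ ε v = false ∧ q < τ.symm v)).card)

/-- The Cambrian `(k,ε)`-twist congruence `≡ᵏ_ε` on permutations of `Fin n`. -/
def cambCong (k : ℕ) {n : ℕ} (ε : Fin n → Bool) :
    Equiv.Perm (Fin n) → Equiv.Perm (Fin n) → Prop :=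
  Relation.EqvGen (cambStep k ε)

namespace CambrianTwist

open Relation

variable {n : ℕ}

/-! ### Adjacent exchanges and the weak order -/

lemma weakLE_refl (τ : Equiv.Perm (Fin n)) : weakLE τ τ := fun _ _ _ h => h

lemma weakLE_trans {τ σ ρ : Equiv.Perm (Fin n)} (h : weakLE τ σ) (h' : weakLE σ ρ) :
    weakLE τ ρ := fun i j hij hτ => h' i j hij (h i j hij hτ)

lemma swap_lt_swap_iff {p q x y : Fin n} (hpq : (q : ℕ) = p + 1) (h₁ : ¬(x = p ∧ y = q))
    (h₂ : ¬(x = q ∧ y = p)) : Equiv.swap p q x < Equiv.swap p q y ↔ x < y := by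
  simp only [Equiv.swap_apply_def]
  split_ifs <;> simp only [Fin.lt_def, Fin.ext_iff] at * <;> omega

lemma mul_swap_symm (τ : Equiv.Perm (Fin n)) (p q u : Fin n) :
    (τ * Equiv.swap p q).symm u = Equiv.swap p q (τ.symm u) := by
  simp [Equiv.symm_apply_eq]

lemma mul_swap_weakLE {τ : Equiv.Perm (Fin n)} {p q : Fin n} (hpq : (q : ℕ) = p + 1)
    (hd : τ q < τ p) : weakLE (τ * Equiv.swap p q) τ := by
  intro i j hij h
  rw [mul_swap_symm, mul_swap_symm] at h
  by_cases h₁ : τ.symm j = p ∧ τ.symm i = q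
  · rw [h₁.1, h₁.2, Fin.lt_def]; omega
  by_cases h₂ : τ.symm j = q ∧ τ.symm i = p
  · rw [← h₂.1, ← h₂.2] at hd
    simp only [Equiv.apply_symm_apply] at hd
    exact absurd hd hij.not_gt
  exact (swap_lt_swap_iff hpq h₁ h₂).1 h

lemma weakLE_mul_swap {τ σ : Equiv.Perm (Fin n)} {p q : Fin n} (hpq : (q : ℕ) = p + 1)
    (h : weakLE τ σ) (hn : ¬ τ.symm (σ p) < τ.symm (σ q)) :
    weakLE τ (σ * Equiv.swap p q) := by
  intro i j hij hτ
  have hσ := h i j hij hτ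
  rw [mul_swap_symm, mul_swap_symm]
  by_cases h₁ : σ.symm j = p ∧ σ.symm i = q
  · rw [← h₁.1, ← h₁.2] at hn
    simp only [Equiv.apply_symm_apply] at hn
    exact absurd hτ hn
  by_cases h₂ : σ.symm j = q ∧ σ.symm i = p
  · rw [h₂.1, h₂.2, Fin.lt_def] at hσ; omega
  exact (swap_lt_swap_iff hpq h₁ h₂).2 hσ

/-- If no descent of `σ` can be undone while staying above `τ ≤ σ`, then `τ⁻¹ σ` is increasing. -/
lemma exists_descent {τ σ : Equiv.Perm (Fin n)} (h : weakLE τ σ) (hne : τ ≠ σ) :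
    ∃ p q : Fin n, (q : ℕ) = p + 1 ∧ σ q < σ p ∧ weakLE τ (σ * Equiv.swap p q) := by
  by_contra! hcon
  apply hne
  have key : ∀ p q : Fin n, (q : ℕ) = p + 1 → τ.symm (σ p) < τ.symm (σ q) := by
    intro p q hpq
    have hlt : p < q := by rw [Fin.lt_def]; omega
    rcases lt_trichotomy (σ p) (σ q) with hlt' | heq | hgt
    · by_contra hnot
      have hne' : τ.symm (σ q) ≠ τ.symm (σ p) := by
        intro he
        exact hlt.ne' (σ.injective (τ.symm.injective he))
      have := h _ _ hlt' (lt_of_le_of_ne (not_lt.1 hnot) hne')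
      simp only [Equiv.symm_apply_apply] at this
      exact absurd this hlt.not_gt
    · exact absurd (σ.injective heq) hlt.ne
    · by_contra hnot
      exact hcon p q hpq hgt (weakLE_mul_swap hpq h hnot)
  have hmono : StrictMono (fun x => τ.symm (σ x)) := by
    cases n with
    | zero => intro x; exact x.elim0
    | succ m =>
      rw [Fin.strictMono_iff_lt_succ]
      intro i
      exact key _ _ (by simp)
  have hid : ∀ x, τ.symm (σ x) = x := by
    intro x
    have h₁ := hmono.le_apply (x := x)
    have h₂ := hmono.apply_le (x := x)
    exact le_antisymm h₂ h₁
  ext x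
  rw [← (Equiv.symm_apply_eq τ).1 (hid x)]

lemma weakLE_antisymm {τ σ : Equiv.Perm (Fin n)} (h : weakLE τ σ) (h' : weakLE σ τ) : τ = σ := by
  by_contra hne
  obtain ⟨p, q, hpq, hd, hle⟩ := exists_descent h hne
  have := weakLE_trans h' hle (σ q) (σ p) hd
  simp only [mul_swap_symm, Equiv.symm_apply_apply, Equiv.swap_apply_left,
    Equiv.swap_apply_right, Fin.lt_def] at this
  omega

/-- The strict weak order. -/
def weakLT (τ σ : Equiv.Perm (Fin n)) : Prop := weakLE τ σ ∧ τ ≠ σ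

lemma weakLT_wf : WellFounded (weakLT (n := n)) := by
  have h₁ : IsTrans (Equiv.Perm (Fin n)) weakLT := ⟨fun a b c hab hbc =>
    ⟨weakLE_trans hab.1 hbc.1, fun hac => hab.2 (weakLE_antisymm hab.1 (hac ▸ hbc.1))⟩⟩
  have h₂ : Std.Irrefl (weakLT (n := n)) := ⟨fun a h => h.2 rfl⟩
  exact Finite.wellFounded_of_trans_of_irrefl _

lemma mul_swap_weakLT {τ : Equiv.Perm (Fin n)} {p q : Fin n} (hpq : (q : ℕ) = p + 1)
    (hd : τ q < τ p) : weakLT (τ * Equiv.swap p q) τ := by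
  refine ⟨mul_swap_weakLE hpq hd, fun h => ?_⟩
  have := congrArg (fun f : Equiv.Perm (Fin n) => f p) h
  simp only [Equiv.Perm.mul_apply, Equiv.swap_apply_left] at this
  exact hd.ne this

/-! ### Downward rewriting along an inherited family of arcs -/

/-- The set of values standing strictly before position `p` in the one-line notation of `τ`. -/
def before (τ : Equiv.Perm (Fin n)) (p : Fin n) : Finset (Fin n) :=
  Finset.univ.filter fun u => τ.symm u < p

@[simp] lemma mem_before {τ : Equiv.Perm (Fin n)} {p u : Fin n} :
    u ∈ before τ p ↔ τ.symm u < p := by simp [before]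

/-- A family `F` of arcs `(a, c, S)` is good if it is closed under enlarging the interval `(a, c)`
and changing `S` arbitrarily outside the original interval. -/
def GoodArcs (F : Fin n → Fin n → Finset (Fin n) → Prop) : Prop :=
  ∀ a₀ a c c₀ S S₀, a₀ ≤ a → c ≤ c₀ → (∀ v, a < v → v < c → (v ∈ S ↔ v ∈ S₀)) →
    F a c S → F a₀ c₀ S₀

/-- Exchange of an adjacent descent of `τ` whose arc lies in `F`. -/
def DownStep (F : Fin n → Fin n → Finset (Fin n) → Prop) (τ τ' : Equiv.Perm (Fin n)) : Prop :=
  ∃ p q : Fin n, (q : ℕ) = p + 1 ∧ τ q < τ p ∧ τ' = τ * Equiv.swap p q ∧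
    F (τ q) (τ p) (before τ p)

variable {F : Fin n → Fin n → Finset (Fin n) → Prop}

lemma DownStep.weakLT {τ τ' : Equiv.Perm (Fin n)} (h : DownStep F τ τ') : weakLT τ' τ := by
  obtain ⟨p, q, hpq, hd, rfl, -⟩ := h
  exact mul_swap_weakLT hpq hd

lemma weakLE_of_reduce {τ ρ : Equiv.Perm (Fin n)} (h : ReflTransGen (DownStep F) τ ρ) :
    weakLE ρ τ := by
  induction h with
  | refl => exact weakLE_refl _
  | tail _ hs ih => exact weakLE_trans hs.weakLT.1 ih

/-- `τ = … c b a …` at positions `p, q, r`: exchanging `b a` may be completed to `a b c` by two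
exchanges whose arcs are inherited from the arc of `c b`. -/
lemma reduce_left (hF : GoodArcs F) {τ : Equiv.Perm (Fin n)} {p q r : Fin n}
    (hpq : (q : ℕ) = p + 1) (hqr : (r : ℕ) = q + 1) (h₁ : τ q < τ p) (h₂ : τ r < τ q)
    (h : F (τ q) (τ p) (before τ p)) :
    ReflTransGen (DownStep F) (τ * Equiv.swap q r)
      (τ * Equiv.swap q r * Equiv.swap p q * Equiv.swap q r) := by
  have npq : p ≠ q := by rw [Ne, Fin.ext_iff]; omega
  have nqr : q ≠ r := by rw [Ne, Fin.ext_iff]; omega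
  have npr : p ≠ r := by rw [Ne, Fin.ext_iff]; omega
  refine .head ⟨p, q, hpq, ?_, rfl, ?_⟩ (.single ⟨q, r, hqr, ?_, rfl, ?_⟩)
  · simpa [Equiv.swap_apply_of_ne_of_ne npq npr] using h₂.trans h₁
  · simp only [Equiv.Perm.mul_apply, Equiv.swap_apply_left,
      Equiv.swap_apply_of_ne_of_ne npq npr]
    refine hF _ _ _ _ _ _ h₂.le le_rfl (fun v _ _ => ?_) h
    simp only [mem_before, mul_swap_symm]
    simp only [Equiv.swap_apply_def]
    split_ifs <;> simp only [Fin.lt_def, Fin.ext_iff] at * <;> omega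
  · simpa [Equiv.swap_apply_of_ne_of_ne npq npr,
      Equiv.swap_apply_of_ne_of_ne npr.symm nqr.symm] using h₁
  · simp only [Equiv.Perm.mul_apply, Equiv.swap_apply_right,
      Equiv.swap_apply_of_ne_of_ne npq npr, Equiv.swap_apply_of_ne_of_ne npr.symm nqr.symm]
    refine hF _ _ _ _ _ _ le_rfl le_rfl (fun v hv hv' => ?_) h
    have e₁ : τ.symm v ≠ p := by rw [Ne, Equiv.symm_apply_eq]; exact hv'.ne
    have e₂ : τ.symm v ≠ q := by rw [Ne, Equiv.symm_apply_eq]; exact hv.ne'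
    have e₃ : τ.symm v ≠ r := by rw [Ne, Equiv.symm_apply_eq]; exact (h₂.trans hv).ne'
    simp only [mem_before, mul_swap_symm, Equiv.swap_apply_of_ne_of_ne e₂ e₃,
      Equiv.swap_apply_of_ne_of_ne e₁ e₂, Fin.lt_def, Ne, Fin.ext_iff] at *
    omega

/-- `τ = … c b a …` at positions `p, q, r`: exchanging `c b` may be completed to `a b c` by two
exchanges whose arcs are inherited from the arc of `b a`. -/
lemma reduce_right (hF : GoodArcs F) {τ : Equiv.Perm (Fin n)} {p q r : Fin n}
    (hpq : (q : ℕ) = p + 1) (hqr : (r : ℕ) = q + 1) (h₁ : τ q < τ p) (h₂ : τ r < τ q)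
    (h : F (τ r) (τ q) (before τ q)) :
    ReflTransGen (DownStep F) (τ * Equiv.swap p q)
      (τ * Equiv.swap p q * Equiv.swap q r * Equiv.swap p q) := by
  have npq : p ≠ q := by rw [Ne, Fin.ext_iff]; omega
  have nqr : q ≠ r := by rw [Ne, Fin.ext_iff]; omega
  have npr : p ≠ r := by rw [Ne, Fin.ext_iff]; omega
  refine .head ⟨q, r, hqr, ?_, rfl, ?_⟩ (.single ⟨p, q, hpq, ?_, rfl, ?_⟩)
  · simpa [Equiv.swap_apply_of_ne_of_ne npr.symm nqr.symm] using h₂.trans h₁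
  · simp only [Equiv.Perm.mul_apply, Equiv.swap_apply_right,
      Equiv.swap_apply_of_ne_of_ne npr.symm nqr.symm]
    refine hF _ _ _ _ _ _ le_rfl h₁.le (fun v hv hv' => ?_) h
    have e₁ : τ.symm v ≠ p := by rw [Ne, Equiv.symm_apply_eq]; exact (hv'.trans h₁).ne
    have e₂ : τ.symm v ≠ q := by rw [Ne, Equiv.symm_apply_eq]; exact hv'.ne
    simp only [mem_before, mul_swap_symm, Equiv.swap_apply_of_ne_of_ne e₁ e₂]
  · simpa [Equiv.swap_apply_of_ne_of_ne npq npr,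
      Equiv.swap_apply_of_ne_of_ne npr.symm nqr.symm] using h₂
  · simp only [Equiv.Perm.mul_apply, Equiv.swap_apply_left,
      Equiv.swap_apply_of_ne_of_ne npq npr, Equiv.swap_apply_of_ne_of_ne npr.symm nqr.symm]
    refine hF _ _ _ _ _ _ le_rfl le_rfl (fun v hv hv' => ?_) h
    have e₁ : τ.symm v ≠ p := by rw [Ne, Equiv.symm_apply_eq]; exact (hv'.trans h₁).ne
    have e₂ : τ.symm v ≠ q := by rw [Ne, Equiv.symm_apply_eq]; exact hv'.ne
    have e₃ : τ.symm v ≠ r := by rw [Ne, Equiv.symm_apply_eq]; exact hv.ne'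
    simp only [mem_before, mul_swap_symm, Equiv.swap_apply_of_ne_of_ne e₂ e₃,
      Equiv.swap_apply_of_ne_of_ne e₁ e₂, Fin.lt_def, Ne, Fin.ext_iff] at *
    omega

lemma braid (τ : Equiv.Perm (Fin n)) {p q r : Fin n} (npq : p ≠ q) (nqr : q ≠ r) (npr : p ≠ r) :
    τ * Equiv.swap p q * Equiv.swap q r * Equiv.swap p q =
      τ * Equiv.swap q r * Equiv.swap p q * Equiv.swap q r := by
  ext x
  simp only [Equiv.Perm.mul_apply]
  congr 2
  simp only [Equiv.swap_apply_def]
  split_ifs <;> simp_all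

/-- If `τ = … c b a …` at positions `p, q, r`, then `… a b c …` lies below both `… b c a …` and
`… c a b …`. -/
lemma longest_weakLE {τ : Equiv.Perm (Fin n)} {p q r : Fin n}
    (hpq : (q : ℕ) = p + 1) (hqr : (r : ℕ) = q + 1) (h₁ : τ q < τ p) (h₂ : τ r < τ q) :
    weakLE (τ * Equiv.swap p q * Equiv.swap q r * Equiv.swap p q) (τ * Equiv.swap p q) ∧
    weakLE (τ * Equiv.swap q r * Equiv.swap p q * Equiv.swap q r) (τ * Equiv.swap q r) := by
  have hF : GoodArcs (fun (_ _ : Fin n) _ => True) := fun _ _ _ _ _ _ _ _ _ _ => trivial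
  exact ⟨weakLE_of_reduce (reduce_right hF hpq hqr h₁ h₂ trivial),
    weakLE_of_reduce (reduce_left hF hpq hqr h₁ h₂ trivial)⟩

/-- The local step of the argument: it gives both local confluence and monotonicity. -/
lemma exists_reduce_le (hF : GoodArcs F) {τ σ : Equiv.Perm (Fin n)} {p q : Fin n}
    (hpq : (q : ℕ) = p + 1) (hd : τ q < τ p) (hs : DownStep F τ σ) :
    ∃ ρ, ReflTransGen (DownStep F) (τ * Equiv.swap p q) ρ ∧ weakLE ρ σ := by
  obtain ⟨s, t, hst, hd', rfl, hf⟩ := hs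
  by_cases e : p = s
  · obtain rfl : q = t := by rw [Fin.ext_iff]; rw [Fin.ext_iff] at e; omega
    subst e
    exact ⟨_, .refl, weakLE_refl _⟩
  by_cases e₁ : q = s
  · subst e₁
    have npq : p ≠ q := by rw [Ne, Fin.ext_iff]; omega
    have nqr : q ≠ t := by rw [Ne, Fin.ext_iff]; omega
    have npr : p ≠ t := by rw [Ne, Fin.ext_iff]; omega
    exact ⟨_, reduce_right hF hpq hst hd hd' hf,
      braid τ npq nqr npr ▸ (longest_weakLE hpq hst hd hd').2⟩
  by_cases e₂ : t = p
  · subst e₂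
    have npq : s ≠ t := by rw [Ne, Fin.ext_iff]; omega
    have nqr : t ≠ q := by rw [Ne, Fin.ext_iff]; omega
    have npr : s ≠ q := by rw [Ne, Fin.ext_iff]; omega
    have hle := (longest_weakLE hst hpq hd' hd).1
    rw [braid τ npq nqr npr] at hle
    exact ⟨_, reduce_left hF hst hpq hd' hd hf, hle⟩
  -- The remaining descents are disjoint, and the two exchanges commute.
  have e₃ : q ≠ t := by rw [Ne, Fin.ext_iff]; rw [Fin.ext_iff] at e; omega
  have a₁ : Equiv.swap p q s = s := Equiv.swap_apply_of_ne_of_ne (Ne.symm e) (Ne.symm e₁)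
  have a₂ : Equiv.swap p q t = t := Equiv.swap_apply_of_ne_of_ne e₂ e₃.symm
  have a₃ : Equiv.swap s t p = p := Equiv.swap_apply_of_ne_of_ne e (Ne.symm e₂)
  have a₄ : Equiv.swap s t q = q := Equiv.swap_apply_of_ne_of_ne e₁ e₃
  have hcomm : τ * Equiv.swap p q * Equiv.swap s t = τ * Equiv.swap s t * Equiv.swap p q := by
    rw [mul_assoc, mul_assoc]
    congr 1
    rw [Equiv.mul_swap_eq_swap_mul, a₁, a₂]
  refine ⟨τ * Equiv.swap p q * Equiv.swap s t, .single ⟨s, t, hst, ?_, rfl, ?_⟩, ?_⟩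
  · simpa [a₁, a₂] using hd'
  · simp only [Equiv.Perm.mul_apply, a₁, a₂]
    refine hF _ _ _ _ _ _ le_rfl le_rfl (fun v _ _ => ?_) hf
    simp only [mem_before, mul_swap_symm]
    simp only [Equiv.swap_apply_def]
    split_ifs <;> simp only [Fin.lt_def, Fin.ext_iff] at * <;> omega
  · rw [hcomm]
    exact mul_swap_weakLE hpq (by simpa [a₃, a₄] using hd)

/-- `ν` is a normal form of `τ`: it is irreducible and `τ` rewrites to it. -/
def IsNormalForm (F : Fin n → Fin n → Finset (Fin n) → Prop) (τ ν : Equiv.Perm (Fin n)) : Prop :=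
  ReflTransGen (DownStep F) τ ν ∧ ∀ ρ, ¬ DownStep F ν ρ

lemma exists_normalForm (F : Fin n → Fin n → Finset (Fin n) → Prop) (τ : Equiv.Perm (Fin n)) :
    ∃ ν, IsNormalForm F τ ν := by
  induction τ using weakLT_wf.induction with
  | _ τ ih =>
    by_cases h : ∃ ρ, DownStep F τ ρ
    · obtain ⟨ρ, hρ⟩ := h
      obtain ⟨ν, hν, hirr⟩ := ih ρ hρ.weakLT
      exact ⟨ν, .head hρ hν, hirr⟩
    · exact ⟨τ, .refl, not_exists.1 h⟩

/-- Normal forms are monotone along the weak order; for `τ = τ'` this contains uniqueness. -/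
lemma normalForm_le (hF : GoodArcs F) (τ' : Equiv.Perm (Fin n)) :
    ∀ τ ν ν', weakLE τ τ' → IsNormalForm F τ ν → IsNormalForm F τ' ν' → weakLE ν ν' := by
  induction τ' using weakLT_wf.induction with
  | _ τ' ih =>
    intro τ ν ν' hle hν hν'
    rcases hν'.1.cases_head with rfl | ⟨σ', hσ', hred'⟩
    · exact weakLE_trans (weakLE_of_reduce hν.1) hle
    -- A lower cover of `τ'` all of whose normal forms are above `ν`.
    have hcover : ∃ p q : Fin n, (q : ℕ) = p + 1 ∧ τ' q < τ' p ∧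
        ∀ μ, IsNormalForm F (τ' * Equiv.swap p q) μ → weakLE ν μ := by
      by_cases hne : τ = τ'
      · subst hne
        rcases hν.1.cases_head with rfl | ⟨σ, hσ, hred⟩
        · exact absurd hσ' (hν.2 _)
        · obtain ⟨p, q, hpq, hd, rfl, -⟩ := id hσ
          exact ⟨p, q, hpq, hd, fun μ hμ =>
            ih _ hσ.weakLT _ _ _ (weakLE_refl _) ⟨hred, hν.2⟩ hμ⟩
      · obtain ⟨p, q, hpq, hd, hle'⟩ := exists_descent hle hne
        exact ⟨p, q, hpq, hd, fun μ hμ =>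
          ih _ (mul_swap_weakLT hpq hd) _ _ _ hle' hν hμ⟩
    obtain ⟨p, q, hpq, hd, hμ⟩ := hcover
    obtain ⟨ρ, hρ, hρσ⟩ := exists_reduce_le hF hpq hd hσ'
    obtain ⟨μ, hμ₁, hμ₂⟩ := exists_normalForm F ρ
    have hlow : weakLE ν μ := hμ μ ⟨hρ.trans hμ₁, hμ₂⟩
    have hhigh : weakLE μ ν' := ih σ' hσ'.weakLT ρ μ ν' hρσ ⟨hμ₁, hμ₂⟩ ⟨hred', hν'.2⟩
    exact weakLE_trans hlow hhigh

/-! ### The Cambrian twist congruence -/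

/-- The arcs along which the `(k, ε)`-twist congruence allows an exchange. -/
def cambArc (k : ℕ) (ε : Fin n → Bool) (a c : Fin n) (S : Finset (Fin n)) : Prop :=
  ∃ a' c' : Fin n, a < a' ∧ a' < c' ∧ c' < c ∧
    ((Finset.univ.filter (fun v => a' ≤ v ∧ v ≤ c' ∧ ε v = false ∧ v ∉ S)).card + k ≤
      (Finset.univ.filter (fun u => a' ≤ u ∧ u ≤ c' ∧ ε u = true ∧ u ∈ S)).card ∨
     (Finset.univ.filter (fun u => a' ≤ u ∧ u ≤ c' ∧ ε u = true ∧ u ∈ S)).card + k ≤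
      (Finset.univ.filter (fun v => a' ≤ v ∧ v ≤ c' ∧ ε v = false ∧ v ∉ S)).card)

lemma goodArcs_cambArc (k : ℕ) (ε : Fin n → Bool) : GoodArcs (cambArc k ε) := by
  rintro a₀ a c c₀ S S₀ ha hc hS ⟨a', c', h₁, h₂, h₃, h⟩
  refine ⟨a', c', ha.trans_lt h₁, h₂, h₃.trans_le hc, ?_⟩
  have e : ∀ v, a' ≤ v → v ≤ c' → (v ∈ S ↔ v ∈ S₀) := fun v hv hv' =>
    hS v (h₁.trans_le hv) (hv'.trans_lt h₃)
  have e₁ : Finset.univ.filter (fun v => a' ≤ v ∧ v ≤ c' ∧ ε v = false ∧ v ∉ S₀) =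
      Finset.univ.filter (fun v => a' ≤ v ∧ v ≤ c' ∧ ε v = false ∧ v ∉ S) :=
    Finset.filter_congr fun v _ => by have := e v; tauto
  have e₂ : Finset.univ.filter (fun v => a' ≤ v ∧ v ≤ c' ∧ ε v = true ∧ v ∈ S₀) =
      Finset.univ.filter (fun v => a' ≤ v ∧ v ≤ c' ∧ ε v = true ∧ v ∈ S) :=
    Finset.filter_congr fun v _ => by have := e v; tauto
  rwa [e₁, e₂]

lemma cambStep_iff {k : ℕ} {ε : Fin n → Bool} {τ τ' : Equiv.Perm (Fin n)} :
    cambStep k ε τ τ' ↔ ∃ p q : Fin n, (q : ℕ) = p + 1 ∧ τ' = τ * Equiv.swap p q ∧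
      cambArc k ε (min (τ p) (τ q)) (max (τ p) (τ q)) (before τ p) := by
  unfold cambStep cambArc
  refine exists_congr fun p => exists_congr fun q => and_congr_right fun hpq =>
    and_congr_right fun _ => exists_congr fun a' => exists_congr fun c' =>
    and_congr_right fun h₁ => and_congr_right fun h₂ => and_congr_right fun h₃ => ?_
  -- A value strictly between the two exchanged ones is neither of them.
  have e : ∀ v, a' ≤ v → v ≤ c' → (q < τ.symm v ↔ ¬ τ.symm v < p) := by
    intro v hv hv'
    have hp : τ.symm v ≠ p := by
      rw [Ne, Equiv.symm_apply_eq]; rintro rfl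
      grind
    have hq : τ.symm v ≠ q := by
      rw [Ne, Equiv.symm_apply_eq]; rintro rfl
      grind
    simp only [Fin.lt_def, Ne, Fin.ext_iff] at *
    omega
  have e₁ : Finset.univ.filter (fun v => a' ≤ v ∧ v ≤ c' ∧ ε v = false ∧ q < τ.symm v) =
      Finset.univ.filter (fun v => a' ≤ v ∧ v ≤ c' ∧ ε v = false ∧ v ∉ before τ p) :=
    Finset.filter_congr fun v _ => by have := e v; rw [mem_before]; tauto
  rw [e₁]
  simp only [mem_before]

lemma DownStep.cambStep {k : ℕ} {ε : Fin n → Bool} {τ τ' : Equiv.Perm (Fin n)}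
    (h : DownStep (cambArc k ε) τ τ') : cambStep k ε τ τ' := by
  obtain ⟨p, q, hpq, hd, rfl, hf⟩ := h
  refine cambStep_iff.2 ⟨p, q, hpq, rfl, ?_⟩
  rwa [min_eq_right hd.le, max_eq_left hd.le]

lemma downStep_or_of_cambStep {k : ℕ} {ε : Fin n → Bool} {τ τ' : Equiv.Perm (Fin n)}
    (h : cambStep k ε τ τ') : DownStep (cambArc k ε) τ τ' ∨ DownStep (cambArc k ε) τ' τ := by
  obtain ⟨p, q, hpq, rfl, hf⟩ := cambStep_iff.1 h
  have hne : τ p ≠ τ q := by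
    intro he
    have := congrArg Fin.val (τ.injective he)
    omega
  rcases lt_or_gt_of_ne hne with hlt | hlt
  · right
    refine ⟨p, q, hpq, by simpa using hlt, by simp [mul_assoc], ?_⟩
    rw [min_eq_left hlt.le, max_eq_right hlt.le] at hf
    have hb : before (τ * Equiv.swap p q) p = before τ p := by
      ext v
      simp only [mem_before, mul_swap_symm]
      simp only [Equiv.swap_apply_def]
      split_ifs <;> simp only [Fin.lt_def, Fin.ext_iff] at * <;> omega
    simpa [hb] using hf
  · left
    rw [min_eq_right hlt.le, max_eq_left hlt.le] at hf
    exact ⟨p, q, hpq, hlt, rfl, hf⟩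

lemma cambCong_of_reduce {k : ℕ} {ε : Fin n → Bool} {τ ρ : Equiv.Perm (Fin n)}
    (h : ReflTransGen (DownStep (cambArc k ε)) τ ρ) : cambCong k ε ρ τ := by
  induction h with
  | refl => exact .refl _
  | tail _ hs ih => exact .trans _ _ _ (.symm _ _ (.rel _ _ hs.cambStep)) ih

/-- The half of the theorem about minima. -/
lemma exists_min (k : ℕ) (ε : Fin n → Bool) :
    ∃ mn : Equiv.Perm (Fin n) → Equiv.Perm (Fin n),
      (∀ τ, cambCong k ε (mn τ) τ ∧ ∀ σ, cambCong k ε σ τ → weakLE (mn τ) σ) ∧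
      (∀ τ τ', weakLE τ τ' → weakLE (mn τ) (mn τ')) := by
  have hF := goodArcs_cambArc k ε
  choose mn hmn using exists_normalForm (cambArc k ε)
  have hdown : ∀ τ τ', DownStep (cambArc k ε) τ τ' → mn τ = mn τ' := by
    intro τ τ' h
    have h' : IsNormalForm (cambArc k ε) τ (mn τ') := ⟨.head h (hmn τ').1, (hmn τ').2⟩
    exact weakLE_antisymm (normalForm_le hF τ _ _ _ (weakLE_refl _) (hmn τ) h')
      (normalForm_le hF τ _ _ _ (weakLE_refl _) h' (hmn τ))
  have hcong : ∀ τ τ', cambCong k ε τ τ' → mn τ = mn τ' := by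
    intro τ τ' h
    induction h with
    | rel x y h =>
      rcases downStep_or_of_cambStep h with h | h
      · exact hdown _ _ h
      · exact (hdown _ _ h).symm
    | refl => rfl
    | symm _ _ _ ih => exact ih.symm
    | trans _ _ _ _ _ ih₁ ih₂ => exact ih₁.trans ih₂
  refine ⟨mn, fun τ => ⟨cambCong_of_reduce (hmn τ).1, fun σ hσ => ?_⟩, fun τ τ' h =>
    normalForm_le hF τ' _ _ _ h (hmn τ) (hmn τ')⟩
  rw [← hcong σ τ hσ]
  exact weakLE_of_reduce (hmn σ).1

/-! ### Reversal of words -/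

/-- The word of `τ` read backwards. -/
def rev (τ : Equiv.Perm (Fin n)) : Equiv.Perm (Fin n) := τ * Fin.revPerm

lemma rev_symm (τ : Equiv.Perm (Fin n)) (u : Fin n) : (rev τ).symm u = (τ.symm u).rev := by
  simp [rev, Equiv.symm_apply_eq]

@[simp] lemma rev_rev (τ : Equiv.Perm (Fin n)) : rev (rev τ) = τ := by
  ext; simp [rev]

lemma rev_weakLE {τ σ : Equiv.Perm (Fin n)} (h : weakLE τ σ) : weakLE (rev σ) (rev τ) := by
  intro i j hij hσ
  rw [rev_symm, rev_symm, Fin.rev_lt_rev] at *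
  by_contra hcon
  have hne : τ.symm j ≠ τ.symm i := fun he => hij.ne' (τ.symm.injective he)
  exact absurd (h i j hij (lt_of_le_of_ne (not_lt.1 hcon) hne)) hσ.not_gt

lemma cambStep_rev {k : ℕ} {ε : Fin n → Bool} {τ τ' : Equiv.Perm (Fin n)}
    (h : cambStep k ε τ τ') : cambStep k (fun v => !ε v) (rev τ) (rev τ') := by
  obtain ⟨p, q, hpq, rfl, a', c', h₁, h₂, h₃, h⟩ := h
  refine ⟨q.rev, p.rev, ?_, ?_, a', c', ?_, h₂, ?_, ?_⟩
  · simp only [Fin.val_rev]; omega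
  · ext x
    simp only [rev, Equiv.Perm.mul_apply, Fin.revPerm_apply]
    congr 2
    simp only [Equiv.swap_apply_def]
    split_ifs <;> simp_all [Fin.rev_eq_iff]
  · simpa [rev, min_comm] using h₁
  · simpa [rev, max_comm] using h₃
  · simp only [rev_symm, Fin.rev_lt_rev, Bool.not_eq_false', Bool.not_eq_true']
    exact h.symm

lemma cambCong_rev {k : ℕ} {ε : Fin n → Bool} {τ τ' : Equiv.Perm (Fin n)}
    (h : cambCong k ε τ τ') : cambCong k (fun v => !ε v) (rev τ) (rev τ') := by
  induction h with
  | rel x y h => exact .rel _ _ (cambStep_rev h)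
  | refl => exact .refl _
  | symm _ _ _ ih => exact .symm _ _ ih
  | trans _ _ _ _ _ ih₁ ih₂ => exact .trans _ _ _ ih₁ ih₂

end CambrianTwist

/-- For `k ≥ 1`, `n ≥ 1` and any signature `ε`, the Cambrian
`(k,ε)`-twist congruence is a lattice congruence of the weak order on `S_n`: every class
has a weak-order minimum and maximum, and the down/up projections are order preserving. -/
theorem cambrian_congruence_is_lattice_congruence
    (k n : ℕ) (hk : 1 ≤ k) (hn : 1 ≤ n) (ε : Fin n → Bool) :
    ∃ mn mx : Equiv.Perm (Fin n) → Equiv.Perm (Fin n),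
      (∀ τ, cambCong k ε (mn τ) τ ∧ cambCong k ε (mx τ) τ ∧
        ∀ σ, cambCong k ε σ τ → weakLE (mn τ) σ ∧ weakLE σ (mx τ)) ∧
      (∀ τ τ', weakLE τ τ' → weakLE (mn τ) (mn τ') ∧ weakLE (mx τ) (mx τ')) := by
  obtain ⟨mn, hmn, hmono⟩ := CambrianTwist.exists_min k ε
  obtain ⟨mx, hmx, hmono'⟩ := CambrianTwist.exists_min k (fun v => !ε v)
  refine ⟨mn, fun τ => CambrianTwist.rev (mx (CambrianTwist.rev τ)), fun τ =>
    ⟨(hmn τ).1, ?_, fun σ hσ => ⟨(hmn τ).2 σ hσ, ?_⟩⟩, fun τ τ' h => ⟨hmono τ τ' h, ?_⟩⟩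
  · simpa using CambrianTwist.cambCong_rev (hmx (CambrianTwist.rev τ)).1
  · simpa using CambrianTwist.rev_weakLE
      ((hmx (CambrianTwist.rev τ)).2 _ (CambrianTwist.cambCong_rev hσ))
  · exact CambrianTwist.rev_weakLE (hmono' _ _ (CambrianTwist.rev_weakLE h))
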